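/- arXiv:1603.08220 — 15 statements merged into one kernel-verified Lean document; each statement's English description precedes it below -/
import Mathlib

section
/- For every partial order (W, ≤), every intuitionistic formula φ and every persistent valuation V, the intuitionistic extension of φ under V equals the classical extension of its GMT translation under V, i.e. ⟦φ⟧_V = ⟦τ(φ)⟧*_V. -/
/-- Intuitionistic formulas over a set `Var` of propositional variables. -/
inductive IForm (Var : Type*) : Type _
  | var : Var → IForm Var
  | bot : IForm Var
  | top : IForm Var
  | and : IForm Var → IForm Var → IForm Var
  | or : IForm Var → IForm Var → IForm Var
  | imp : IForm Var → IForm Var → IForm Var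

/-- S4 modal formulas over a set `Var` of propositional variables. -/
inductive SForm (Var : Type*) : Type _
  | var : Var → SForm Var
  | bot : SForm Var
  | top : SForm Var
  | and : SForm Var → SForm Var → SForm Var
  | or : SForm Var → SForm Var → SForm Var
  | neg : SForm Var → SForm Var
  | box : SForm Var → SForm Var

variable {Var W : Type*}

/-- Classical extension of an S4 formula on a partial order `(W, ≤)` under a valuation `U`,
with `□α` interpreted as `{w | ∀ v ≥ w, v ∈ ⟦α⟧}`. -/
def SForm.ext [PartialOrder W] (U : Var → Set W) : SForm Var → Set W
  | .var p => U p
  | .bot => ∅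
  | .top => Set.univ
  | .and α β => α.ext U ∩ β.ext U
  | .or α β => α.ext U ∪ β.ext U
  | .neg α => (α.ext U)ᶜ
  | .box α => {w | ∀ v, w ≤ v → v ∈ α.ext U}

/-- Intuitionistic extension of an intuitionistic formula on a partial order `(W, ≤)`
under a (persistent) valuation `V`. -/
def IForm.ext [PartialOrder W] (V : Var → Set W) : IForm Var → Set W
  | .var p => V p
  | .bot => ∅
  | .top => Set.univ
  | .and φ ψ => φ.ext V ∩ ψ.ext V
  | .or φ ψ => φ.ext V ∪ ψ.ext V
  | .imp φ ψ => {w | ∀ v, w ≤ v → v ∈ φ.ext V → v ∈ ψ.ext V}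

/-- The Gödel–McKinsey–Tarski translation. -/
def gmt : IForm Var → SForm Var
  | .var p => .box (.var p)
  | .bot => .bot
  | .top => .top
  | .and φ ψ => .and (gmt φ) (gmt ψ)
  | .or φ ψ => .or (gmt φ) (gmt ψ)
  | .imp φ ψ => .box (.or (.neg (gmt φ)) (gmt ψ))

/-- For every persistent valuation `V`, the intuitionistic extension of `φ` under `V`
equals the classical extension of its GMT translation under `V`. -/
theorem iext_eq_sext_gmt [PartialOrder W] (φ : IForm Var) (V : Var → Set W)
    (hV : ∀ p, IsUpperSet (V p)) :
    φ.ext V = (gmt φ).ext V := by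
  induction φ with
  | var p =>
    -- Persistence makes `V p` equal to its own □-interior.
    ext w
    exact ⟨fun hw v hwv => hV p hwv hw, fun h => h w le_rfl⟩
  | bot => rfl
  | top => rfl
  | and φ ψ ihφ ihψ => simp only [IForm.ext, gmt, SForm.ext, ihφ, ihψ]
  | or φ ψ ihφ ihψ => simp only [IForm.ext, gmt, SForm.ext, ihφ, ihψ]
  | imp φ ψ ihφ ihψ =>
    simp only [IForm.ext, gmt, SForm.ext, ihφ, ihψ, Set.mem_union, Set.mem_compl_iff,
      imp_iff_not_or]
end

section
/- For every partial order (W, ≤), every intuitionistic formula φ and every valuation U : Var → 𝒫(W), the classical extension of the GMT translation of φ under U equals the intuitionistic extension of φ under the persistent valuation U↑, i.e. ⟦τ(φ)⟧*_U = ⟦φ⟧_{U↑}, where U↑(p) := {w ∈ W | ∀v, w ≤ v → v ∈ U(p)} (each U↑(p) is an upper set). -/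
variable {Var W : Type*}

/-- For every valuation `U`, the classical extension of the GMT translation of `φ` under `U`
equals the intuitionistic extension of `φ` under the persistent valuation
`U↑(p) := {w | ∀ v ≥ w, v ∈ U p}` (and each `U↑(p)` is indeed an upper set). -/
theorem sext_gmt_eq_iext_up [PartialOrder W] (φ : IForm Var) (U : Var → Set W) :
    (∀ p, IsUpperSet {w : W | ∀ v, w ≤ v → v ∈ U p}) ∧
    (gmt φ).ext U = φ.ext (fun p => {w : W | ∀ v, w ≤ v → v ∈ U p}) := by
  refine ⟨fun p a b hab ha v hv => ha v (hab.trans hv), ?_⟩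
  induction φ with
  | var p => rfl
  | bot => rfl
  | top => rfl
  | and φ ψ ihφ ihψ => simp only [gmt, SForm.ext, IForm.ext, ihφ, ihψ]
  | or φ ψ ihφ ihψ => simp only [gmt, SForm.ext, IForm.ext, ihφ, ihψ]
  | imp φ ψ ihφ ihψ =>
    -- `□(¬τ(φ) ∨ τ(ψ))` unfolds to the Kripke clause for `→`, reading `¬a ∨ b` as `a → b`.
    simp only [gmt, SForm.ext, IForm.ext, ihφ, ihψ, Set.mem_union, Set.mem_compl_iff,
      imp_iff_not_or]
end

section
/- For every intuitionistic formula φ and every partial order (W, ≤): φ is intuitionistically valid on (W, ≤) (i.e. ⟦φ⟧_V = W for every persistent valuation V) if and only if its GMT translation τ(φ) is classically valid on (W, ≤) (i.e. ⟦τ(φ)⟧*_U = W for every valuation U). -/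
variable {Var W : Type*}

/-- The valuation sending `p` to `⟦□p⟧*_U`, the largest upper set contained in `U p`. -/
def interiorVal [PartialOrder W] (U : Var → Set W) : Var → Set W :=
  fun p => {w | ∀ v, w ≤ v → v ∈ U p}

theorem isUpperSet_interiorVal [PartialOrder W] (U : Var → Set W) (p : Var) :
    IsUpperSet (interiorVal U p) :=
  fun _ _ hab ha v hv => ha v (hab.trans hv)

theorem interiorVal_eq_self [PartialOrder W] {V : Var → Set W} (hV : ∀ p, IsUpperSet (V p)) :
    interiorVal V = V := by
  funext p
  ext w
  exact ⟨fun h => h w le_rfl, fun h _ hv => hV p hv h⟩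

/-- The extension of a translated formula is an intuitionistic extension, for an arbitrary
valuation `U`. -/
theorem gmt_ext [PartialOrder W] (U : Var → Set W) (φ : IForm Var) :
    (gmt φ).ext U = φ.ext (interiorVal U) := by
  induction φ with
  | var p => rfl
  | bot => rfl
  | top => rfl
  | and φ ψ hφ hψ => simp only [gmt, SForm.ext, IForm.ext, hφ, hψ]
  | or φ ψ hφ hψ => simp only [gmt, SForm.ext, IForm.ext, hφ, hψ]
  | imp φ ψ hφ hψ =>
    simp only [gmt, SForm.ext, IForm.ext, hφ, hψ, Set.mem_union, Set.mem_compl_iff,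
      imp_iff_not_or]

/-- An intuitionistic formula `φ` is intuitionistically valid on a partial order `(W, ≤)`
(i.e. `⟦φ⟧_V = W` for every persistent valuation `V`) iff its GMT translation `τ(φ)` is
classically valid on `(W, ≤)` (i.e. `⟦τ(φ)⟧*_U = W` for every valuation `U`). -/
theorem intuitionistic_valid_iff_gmt_valid [PartialOrder W] (φ : IForm Var) :
    (∀ V : Var → Set W, (∀ p, IsUpperSet (V p)) → φ.ext V = Set.univ) ↔
    (∀ U : Var → Set W, (gmt φ).ext U = Set.univ) := by
  constructor
  · intro h U
    rw [gmt_ext]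
    exact h _ (isUpperSet_interiorVal U)
  · intro h V hV
    rw [← interiorVal_eq_self hV, ← gmt_ext]
    exact h V
end

section
/- For every intuitionistic formula φ: (a) e(⟦φ⟧_V) = ⟦τ(φ)⟧_{e∘V} for every valuation V : Var → A; and (b) ⟦τ(φ)⟧_U = e(⟦φ⟧_{ι∘U}) for every valuation U : Var → B. -/
variable {Var : Type*}

/-- Homomorphic evaluation of an intuitionistic formula in a Heyting algebra `A`,
interpreting `→` by the Heyting implication `⇨`. -/
def IForm.eval {A : Type*} [HeytingAlgebra A] (V : Var → A) : IForm Var → A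
  | .var p => V p
  | .bot => ⊥
  | .top => ⊤
  | .and φ ψ => φ.eval V ⊓ ψ.eval V
  | .or φ ψ => φ.eval V ⊔ ψ.eval V
  | .imp φ ψ => φ.eval V ⇨ ψ.eval V

/-- Homomorphic evaluation of an S4 formula in a Boolean algebra `B`, interpreting
`¬` by Boolean complement and `□` by the given map `bx : B → B`. -/
def SForm.eval {B : Type*} [BooleanAlgebra B] (bx : B → B) (U : Var → B) : SForm Var → B
  | .var p => U p
  | .bot => ⊥
  | .top => ⊤
  | .and α β => α.eval bx U ⊓ β.eval bx U
  | .or α β => α.eval bx U ⊔ β.eval bx U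
  | .neg α => (α.eval bx U)ᶜ
  | .box α => bx (α.eval bx U)

/-- Conditions (a) and (b) for the GMT translation, algebraically: for every
intuitionistic formula `φ`, (a) `e ⟦φ⟧_V = ⟦τ(φ)⟧_{e∘V}` for every valuation
`V : Var → A`, and (b) `⟦τ(φ)⟧_U = e ⟦φ⟧_{ι∘U}` for every valuation `U : Var → B`,
where `□` is interpreted as `e ∘ ι`. -/
theorem gmt_conditions_a_b {A B : Type*} [HeytingAlgebra A] [BooleanAlgebra B]
    (e : A → B) (ι : B → A)
    (hinj : Function.Injective e)
    (hinf : ∀ a b : A, e (a ⊓ b) = e a ⊓ e b)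
    (hsup : ∀ a b : A, e (a ⊔ b) = e a ⊔ e b)
    (hbot : e ⊥ = ⊥) (htop : e ⊤ = ⊤)
    (hadj : ∀ (a : A) (b : B), e a ≤ b ↔ a ≤ ι b)
    (himp : ∀ a b : A, a ⇨ b = ι ((e a)ᶜ ⊔ e b))
    (φ : IForm Var) :
    (∀ V : Var → A, e (φ.eval V) = (gmt φ).eval (e ∘ ι) (e ∘ V)) ∧
    (∀ U : Var → B, (gmt φ).eval (e ∘ ι) U = e (φ.eval (ι ∘ U))) := by
  have hb (U : Var → B) : (gmt φ).eval (e ∘ ι) U = e (φ.eval (ι ∘ U)) := by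
    induction φ with
    | var p => rfl
    | bot => exact hbot.symm
    | top => exact htop.symm
    | and φ ψ ihφ ihψ => simp only [gmt, SForm.eval, IForm.eval, ihφ, ihψ, hinf]
    | or φ ψ ihφ ihψ => simp only [gmt, SForm.eval, IForm.eval, ihφ, ihψ, hsup]
    | imp φ ψ ihφ ihψ =>
      simp only [gmt, SForm.eval, IForm.eval, ihφ, ihψ, himp, Function.comp_apply]
  refine ⟨fun V => ?_, hb⟩
  -- Injectivity of the left adjoint `e` makes the unit of the adjunction an isomorphism,
  -- so (a) is the case `U = e ∘ V` of (b).
  have hgc : GaloisConnection e ι := hadj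
  have hV : ι ∘ e ∘ V = V := funext fun p => hinj (hgc.l_u_l_eq_l (V p))
  rw [hb, hV]
end

section
/- For all intuitionistic formulas φ and ψ: ⟦φ⟧_V ≤ ⟦ψ⟧_V holds for every valuation V : Var → A if and only if ⟦τ(φ)⟧_U ≤ ⟦τ(ψ)⟧_U holds for every valuation U : Var → B. (That is, the GMT translation is full and faithful with respect to validity of inequalities in A and B.) -/
variable {Var : Type*}

/-- The translation is evaluated inside the image of `e`: it agrees there with the
intuitionistic evaluation under the valuation `ι ∘ U`. -/
theorem gmt_eval {A B : Type*} [HeytingAlgebra A] [BooleanAlgebra B]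
    (e : A → B) (ι : B → A)
    (hinf : ∀ a b : A, e (a ⊓ b) = e a ⊓ e b)
    (hsup : ∀ a b : A, e (a ⊔ b) = e a ⊔ e b)
    (hbot : e ⊥ = ⊥) (htop : e ⊤ = ⊤)
    (himp : ∀ a b : A, a ⇨ b = ι ((e a)ᶜ ⊔ e b))
    (U : Var → B) (φ : IForm Var) :
    (gmt φ).eval (e ∘ ι) U = e (φ.eval (ι ∘ U)) := by
  induction φ with
  | var p => rfl
  | bot => exact hbot.symm
  | top => exact htop.symm
  | and φ ψ h₁ h₂ => simp only [gmt, SForm.eval, IForm.eval, h₁, h₂, hinf]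
  | or φ ψ h₁ h₂ => simp only [gmt, SForm.eval, IForm.eval, h₁, h₂, hsup]
  | imp φ ψ h₁ h₂ =>
    simp only [gmt, SForm.eval, IForm.eval, h₁, h₂, himp, Function.comp_apply]

/-- The GMT translation is full and faithful with respect to validity of inequalities:
for all intuitionistic formulas `φ, ψ`, `⟦φ⟧_V ≤ ⟦ψ⟧_V` holds for every valuation
`V : Var → A` iff `⟦τ(φ)⟧_U ≤ ⟦τ(ψ)⟧_U` holds for every valuation `U : Var → B`. -/
theorem gmt_full_faithful {A B : Type*} [HeytingAlgebra A] [BooleanAlgebra B]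
    (e : A → B) (ι : B → A)
    (hinj : Function.Injective e)
    (hinf : ∀ a b : A, e (a ⊓ b) = e a ⊓ e b)
    (hsup : ∀ a b : A, e (a ⊔ b) = e a ⊔ e b)
    (hbot : e ⊥ = ⊥) (htop : e ⊤ = ⊤)
    (hadj : ∀ (a : A) (b : B), e a ≤ b ↔ a ≤ ι b)
    (himp : ∀ a b : A, a ⇨ b = ι ((e a)ᶜ ⊔ e b))
    (φ ψ : IForm Var) :
    (∀ V : Var → A, φ.eval V ≤ ψ.eval V) ↔
    (∀ U : Var → B, (gmt φ).eval (e ∘ ι) U ≤ (gmt ψ).eval (e ∘ ι) U) := by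
  have he : ∀ a b : A, e a ≤ e b ↔ a ≤ b := fun a b => by
    rw [← inf_eq_left, ← hinf, hinj.eq_iff, inf_eq_left]
  -- The unit of the adjunction is an equality because `e` reflects order, so every
  -- `V` has the form `ι ∘ U`, with `U = e ∘ V`.
  have hιe : ∀ a : A, ι (e a) = a := fun a =>
    le_antisymm ((he _ _).1 ((hadj _ _).2 le_rfl)) ((hadj _ _).1 le_rfl)
  simp only [gmt_eval e ι hinf hsup hbot htop himp, he]
  refine ⟨fun h U => h (ι ∘ U), fun h V => ?_⟩
  have hV : ι ∘ (e ∘ V) = V := funext fun p => hιe (V p)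
  simpa only [hV] using h (e ∘ V)
end

section
/- For every Heyting algebra A there exist a Boolean algebra B, an injective lattice homomorphism e : A → B preserving ⊥ and ⊤, and a map ι : B → A such that e(a) ≤ b iff a ≤ ι(b) for all a ∈ A and b ∈ B (ι is a right adjoint of e), and such that a ⇨ b = ι((e a)ᶜ ⊔ e b) for all a, b ∈ A, where ⇨ is the Heyting implication of A and ᶜ is Boolean complement in B. -/
/-!
By the prime ideal theorem for distributive lattices, `a ↦ {I prime | a ∉ I}` embeds `A`, as a
bounded lattice, into the power set of its prime ideals. Let `B` be the Boolean subalgebra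
generated by the image (the clopen sets of the Esakia dual). Each element of `B` is a finite union
of differences `e c \ e d`, and so is its complement. Now `e a` is disjoint from `e c \ e d` iff
`a ⊓ c ≤ d`, i.e. iff `a ≤ c ⇨ d`; and disjointness from a finite union is governed by the meet of
the corresponding implications. Hence for every `b : B` there is a largest `i : A` with `e i ≤ b`;
this is `ι b`. The formula for `⇨` then follows from the adjunction, since
`e c ≤ (e a)ᶜ ⊔ e b` iff `e (c ⊓ a) ≤ e b` iff `c ⊓ a ≤ b`.
-/

universe u

/-- The data of a Boolean algebra `B` together with an injective lattice homomorphism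
`e : A → B` preserving `⊥` and `⊤`, having a right adjoint `ι : B → A`
(`e a ≤ b ↔ a ≤ ι b`) such that the Heyting implication of `A` is recovered as
`a ⇨ b = ι ((e a)ᶜ ⊔ e b)`. -/
structure HeytingBooleanEmbedding (A : Type u) [HeytingAlgebra A] : Type (u + 1) where
  B : Type u
  [instB : BooleanAlgebra B]
  e : A → B
  ι : B → A
  inj : Function.Injective e
  map_inf : ∀ a b : A, e (a ⊓ b) = e a ⊓ e b
  map_sup : ∀ a b : A, e (a ⊔ b) = e a ⊔ e b
  map_bot : e ⊥ = ⊥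
  map_top : e ⊤ = ⊤
  adj : ∀ (a : A) (b : B), e a ≤ b ↔ a ≤ ι b
  himp_eq : ∀ a b : A, a ⇨ b = ι ((e a)ᶜ ⊔ e b)

namespace StoneEmbedding

open Order

/-- The Stone representation of a bounded distributive lattice: `a` is sent to the set of prime
ideals not containing `a`, equivalently to the set of prime filters containing `a`. -/
def stoneHom (A : Type u) [DistribLattice A] [BoundedOrder A] :
    BoundedLatticeHom A (Set {I : Ideal A // I.IsPrime}) where
  toFun a := {I | a ∉ I.1}
  map_sup' a b := by
    ext I
    simp only [Set.mem_ofPred_eq, Ideal.sup_mem_iff, Set.sup_eq_union, Set.mem_union]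
    tauto
  map_inf' a b := by
    ext I
    have h : a ⊓ b ∈ I.1 ↔ a ∈ I.1 ∨ b ∈ I.1 :=
      ⟨I.2.mem_or_mem, fun h => h.elim (I.1.lower inf_le_left) (I.1.lower inf_le_right)⟩
    simp only [Set.mem_ofPred_eq, h, Set.inf_eq_inter, Set.mem_inter_iff]
    tauto
  map_top' := by
    ext I
    simpa using I.2.toIsProper.top_notMem
  map_bot' := by
    ext I
    simp

theorem stoneHom_le_iff {A : Type u} [DistribLattice A] [BoundedOrder A] {a b : A} :
    stoneHom A a ≤ stoneHom A b ↔ a ≤ b := by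
  refine ⟨fun h => ?_, fun h => OrderHomClass.mono (stoneHom A) h⟩
  by_contra hab
  -- A prime ideal containing `b` but not `a` separates the two images.
  obtain ⟨J, hJ, hbJ, haJ⟩ := DistribLattice.prime_ideal_of_disjoint_filter_ideal
    (F := PFilter.principal a) (I := Ideal.principal b)
    (Set.disjoint_left.2 fun x hx hx' => hab (le_trans hx hx'))
  have ha : a ∉ J := fun h => Set.disjoint_left.1 haJ (PFilter.mem_principal.2 le_rfl) h
  exact h (a := ⟨J, hJ⟩) ha (hbJ (Ideal.mem_principal.2 le_rfl))

/-- Every element of the Boolean subalgebra generated by the Stone image has a pseudocomplement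
in `A`: a largest `i` whose image is disjoint from it. -/
theorem exists_disjoint_iff {A : Type u} [HeytingAlgebra A] {x : Set {I : Ideal A // I.IsPrime}}
    (hx : x ∈ BooleanSubalgebra.closure (Set.range (stoneHom A))) :
    ∃ i : A, ∀ a, Disjoint (stoneHom A a) x ↔ a ≤ i := by
  induction x, hx using BooleanSubalgebra.closure_sdiff_sup_induction with
  | isSublattice =>
    constructor
    · rintro _ ⟨a, rfl⟩ _ ⟨b, rfl⟩
      exact ⟨a ⊔ b, map_sup _ a b⟩
    · rintro _ ⟨a, rfl⟩ _ ⟨b, rfl⟩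
      exact ⟨a ⊓ b, map_inf _ a b⟩
  | bot_mem => exact ⟨⊥, map_bot _⟩
  | top_mem => exact ⟨⊤, map_top _⟩
  | sdiff x hx y hy =>
    obtain ⟨c, rfl⟩ := hx
    obtain ⟨d, rfl⟩ := hy
    refine ⟨c ⇨ d, fun a => ?_⟩
    rw [le_himp_iff, ← stoneHom_le_iff, map_inf, sdiff_eq, disjoint_iff, ← inf_assoc,
      ← disjoint_iff, disjoint_compl_right_iff]
  | sup x _ y _ ihx ihy =>
    obtain ⟨i, hi⟩ := ihx
    obtain ⟨j, hj⟩ := ihy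
    exact ⟨i ⊓ j, fun a => by rw [disjoint_sup_right, hi, hj, le_inf_iff]⟩

end StoneEmbedding

open StoneEmbedding in
/-- Every Heyting algebra embeds into a Boolean algebra via an injective lattice
homomorphism preserving `⊥` and `⊤` which has a right adjoint `ι` recovering the
Heyting implication as `a ⇨ b = ι ((e a)ᶜ ⊔ e b)`. -/
theorem exists_heytingBooleanEmbedding (A : Type u) [HeytingAlgebra A] :
    Nonempty (HeytingBooleanEmbedding A) := by
  let B := BooleanSubalgebra.closure (Set.range (stoneHom A))
  let e : A → B := fun a => ⟨stoneHom A a, BooleanSubalgebra.subset_closure ⟨a, rfl⟩⟩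
  have e_le {a b : A} : e a ≤ e b ↔ a ≤ b := stoneHom_le_iff
  have e_inf (a b : A) : e (a ⊓ b) = e a ⊓ e b := Subtype.ext (map_inf (stoneHom A) a b)
  have key (b : B) : ∃ i : A, ∀ a, e a ≤ b ↔ a ≤ i := by
    obtain ⟨i, hi⟩ := exists_disjoint_iff (BooleanSubalgebra.compl_mem b.2)
    exact ⟨i, fun a => by rw [← hi a, disjoint_compl_right_iff]; rfl⟩
  choose ι hι using key
  exact ⟨{
    B := B
    e := e
    ι := ι
    inj := fun a b h => le_antisymm (e_le.1 h.le) (e_le.1 h.ge)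
    map_inf := e_inf
    map_sup := fun a b => Subtype.ext (map_sup (stoneHom A) a b)
    map_bot := Subtype.ext (map_bot (stoneHom A))
    map_top := Subtype.ext (map_top (stoneHom A))
    adj := fun a b => hι b a
    himp_eq := fun a b => eq_of_forall_le_iff fun c => by
      rw [← hι, le_himp_iff, ← e_le, e_inf, ← le_himp_iff, himp_eq, sup_comm] }⟩
end

section
/- Let A be a co-Heyting algebra, B a Boolean algebra, e : A → B an injective lattice homomorphism preserving ⊥ and ⊤, and c : B → A a left adjoint of e (c(b) ≤ a iff b ≤ e(a) for all a ∈ A, b ∈ B). Define ◇ := e ∘ c : B → B. Then ◇ is a normal S4 diamond operator on B: ◇⊥ = ⊥, ◇(x ⊔ y) = ◇x ⊔ ◇y for all x, y ∈ B, x ≤ ◇x for all x ∈ B, and ◇◇x ≤ ◇x for all x ∈ B. -/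
/-- If `A` is a co-Heyting algebra, `B` a Boolean algebra, `e : A → B` an injective
lattice homomorphism preserving `⊥` and `⊤`, and `c : B → A` a left adjoint of `e`,
then `◇ := e ∘ c` is a normal S4 diamond operator on `B`: it preserves `⊥` and binary
joins, is inflationary, and is idempotent-decreasing. -/
theorem dia_is_normal_S4 {A B : Type*} [CoheytingAlgebra A] [BooleanAlgebra B]
    (e : A → B) (c : B → A)
    (hinj : Function.Injective e)
    (hinf : ∀ a b : A, e (a ⊓ b) = e a ⊓ e b)
    (hsup : ∀ a b : A, e (a ⊔ b) = e a ⊔ e b)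
    (hbot : e ⊥ = ⊥) (htop : e ⊤ = ⊤)
    (hadj : ∀ (a : A) (b : B), c b ≤ a ↔ b ≤ e a) :
    e (c ⊥) = ⊥ ∧
    (∀ x y : B, e (c (x ⊔ y)) = e (c x) ⊔ e (c y)) ∧
    (∀ x : B, x ≤ e (c x)) ∧
    (∀ x : B, e (c (e (c x))) ≤ e (c x)) := by
  have gc : GaloisConnection c e := fun b a => hadj a b
  refine ⟨?_, fun x y => ?_, gc.le_u_l, fun x => gc.monotone_u (gc.l_u_le (c x))⟩
  -- The left adjoint `c` preserves finite joins, and `e` does so by hypothesis.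
  · rw [gc.l_bot, hbot]
  · rw [gc.l_sup, hsup]
end

section
/- For every co-intuitionistic formula φ: (a) e(⟦φ⟧_V) = ⟦σ(φ)⟧_{e∘V} for every valuation V : Var → A; and (b) ⟦σ(φ)⟧_U = e(⟦φ⟧_{c∘U}) for every valuation U : Var → B. -/
/-!
Condition (b) is a structural induction on `φ`: a variable is sent to `◇p`, whose value is
`e (c (U p))` by definition, the lattice cases hold because `e` is a lattice homomorphism, and the
co-implication case is the image under `e` of the hypothesis `b \ a = c ((e a)ᶜ ⊓ e b)`.
Condition (a) is (b) for `U = e ∘ V`, since `c ∘ e = id` (`cogmt_leftInverse`).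
-/

/-- Co-intuitionistic formulas over a set `Var` of propositional variables;
`coimp φ ψ` stands for the co-implication `φ >— ψ`. -/
inductive CForm (Var : Type*) : Type _
  | var : Var → CForm Var
  | bot : CForm Var
  | top : CForm Var
  | and : CForm Var → CForm Var → CForm Var
  | or : CForm Var → CForm Var → CForm Var
  | coimp : CForm Var → CForm Var → CForm Var

/-- S4◇ modal formulas over a set `Var` of propositional variables. -/
inductive DForm (Var : Type*) : Type _
  | var : Var → DForm Var
  | bot : DForm Var
  | top : DForm Var
  | and : DForm Var → DForm Var → DForm Var
  | or : DForm Var → DForm Var → DForm Var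
  | neg : DForm Var → DForm Var
  | dia : DForm Var → DForm Var

variable {Var : Type*}

/-- Homomorphic evaluation of a co-intuitionistic formula in a co-Heyting algebra `A`,
interpreting the co-implication `φ >— ψ` as the co-Heyting difference `⟦ψ⟧ \ ⟦φ⟧`
(which satisfies `(a >— b) ≤ x ↔ b ≤ a ⊔ x`). -/
def CForm.eval {A : Type*} [CoheytingAlgebra A] (V : Var → A) : CForm Var → A
  | .var p => V p
  | .bot => ⊥
  | .top => ⊤
  | .and φ ψ => φ.eval V ⊓ ψ.eval V
  | .or φ ψ => φ.eval V ⊔ ψ.eval V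
  | .coimp φ ψ => ψ.eval V \ φ.eval V

/-- Homomorphic evaluation of an S4◇ formula in a Boolean algebra `B`, interpreting
`¬` by Boolean complement and `◇` by the given map `dm : B → B`. -/
def DForm.eval {B : Type*} [BooleanAlgebra B] (dm : B → B) (U : Var → B) : DForm Var → B
  | .var p => U p
  | .bot => ⊥
  | .top => ⊤
  | .and α β => α.eval dm U ⊓ β.eval dm U
  | .or α β => α.eval dm U ⊔ β.eval dm U
  | .neg α => (α.eval dm U)ᶜ
  | .dia α => dm (α.eval dm U)

/-- The co-GMT translation `σ`. -/
def cogmt : CForm Var → DForm Var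
  | .var p => .dia (.var p)
  | .bot => .bot
  | .top => .top
  | .and φ ψ => .and (cogmt φ) (cogmt ψ)
  | .or φ ψ => .or (cogmt φ) (cogmt ψ)
  | .coimp φ ψ => .dia (.and (.neg (cogmt φ)) (cogmt ψ))

/-- A left adjoint of an injective meet-preserving map is a retraction of it. -/
theorem cogmt_leftInverse {A B : Type*} [CoheytingAlgebra A] [BooleanAlgebra B]
    (e : A → B) (c : B → A) (hinj : Function.Injective e)
    (hinf : ∀ a b : A, e (a ⊓ b) = e a ⊓ e b)
    (hadj : ∀ (a : A) (b : B), c b ≤ a ↔ b ≤ e a) (a : A) : c (e a) = a := by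
  have hle : c (e a) ≤ a := (hadj _ _).2 le_rfl
  have hunit : e a ≤ e (c (e a)) := (hadj _ _).1 le_rfl
  apply hinj
  rw [← inf_eq_left.2 hle, hinf]
  exact inf_eq_right.2 hunit

/-- Conditions (a) and (b) for the co-GMT translation: for every co-intuitionistic
formula `φ`, (a) `e ⟦φ⟧_V = ⟦σ(φ)⟧_{e∘V}` for every valuation `V : Var → A`, and
(b) `⟦σ(φ)⟧_U = e ⟦φ⟧_{c∘U}` for every valuation `U : Var → B`, where `◇` is
interpreted as `e ∘ c`. -/
theorem cogmt_conditions_a_b {A B : Type*} [CoheytingAlgebra A] [BooleanAlgebra B]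
    (e : A → B) (c : B → A)
    (hinj : Function.Injective e)
    (hinf : ∀ a b : A, e (a ⊓ b) = e a ⊓ e b)
    (hsup : ∀ a b : A, e (a ⊔ b) = e a ⊔ e b)
    (hbot : e ⊥ = ⊥) (htop : e ⊤ = ⊤)
    (hadj : ∀ (a : A) (b : B), c b ≤ a ↔ b ≤ e a)
    (hcoimp : ∀ a b : A, b \ a = c ((e a)ᶜ ⊓ e b))
    (φ : CForm Var) :
    (∀ V : Var → A, e (φ.eval V) = (cogmt φ).eval (e ∘ c) (e ∘ V)) ∧
    (∀ U : Var → B, (cogmt φ).eval (e ∘ c) U = e (φ.eval (c ∘ U))) := by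
  have hb : ∀ U : Var → B, (cogmt φ).eval (e ∘ c) U = e (φ.eval (c ∘ U)) := by
    intro U
    induction φ with
    | var p => rfl
    | bot => exact hbot.symm
    | top => exact htop.symm
    | and φ ψ ihφ ihψ => simp only [cogmt, DForm.eval, CForm.eval, hinf, ihφ, ihψ]
    | or φ ψ ihφ ihψ => simp only [cogmt, DForm.eval, CForm.eval, hsup, ihφ, ihψ]
    | coimp φ ψ ihφ ihψ =>
      simp only [cogmt, DForm.eval, CForm.eval, hcoimp, ihφ, ihψ, Function.comp_apply]
  refine ⟨fun V => ?_, hb⟩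
  have hV : c ∘ e ∘ V = V := funext fun p => cogmt_leftInverse e c hinj hinf hadj (V p)
  rw [hb, hV]
end

section
/- For all co-intuitionistic formulas φ and ψ: ⟦φ⟧_V ≤ ⟦ψ⟧_V holds for every valuation V : Var → A if and only if ⟦σ(φ)⟧_U ≤ ⟦σ(ψ)⟧_U holds for every valuation U : Var → B. (That is, the co-GMT translation is full and faithful with respect to validity of inequalities in A and B.) -/
variable {Var : Type*}

/-- The translation evaluated under `U` is the image in `B` of the original formula evaluated
under `c ∘ U`. -/
theorem eval_cogmt {A B : Type*} [CoheytingAlgebra A] [BooleanAlgebra B]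
    (e : A → B) (c : B → A)
    (hinf : ∀ a b : A, e (a ⊓ b) = e a ⊓ e b)
    (hsup : ∀ a b : A, e (a ⊔ b) = e a ⊔ e b)
    (hbot : e ⊥ = ⊥) (htop : e ⊤ = ⊤)
    (hcoimp : ∀ a b : A, b \ a = c ((e a)ᶜ ⊓ e b))
    (U : Var → B) (φ : CForm Var) :
    (cogmt φ).eval (e ∘ c) U = e (φ.eval (c ∘ U)) := by
  induction φ with
  | var p => rfl
  | bot => exact hbot.symm
  | top => exact htop.symm
  | and φ ψ ihφ ihψ => simp only [cogmt, DForm.eval, CForm.eval, hinf, ihφ, ihψ]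
  | or φ ψ ihφ ihψ => simp only [cogmt, DForm.eval, CForm.eval, hsup, ihφ, ihψ]
  | coimp φ ψ ihφ ihψ =>
    simp only [cogmt, DForm.eval, CForm.eval, hcoimp, ihφ, ihψ, Function.comp_apply]

/-- The co-GMT translation is full and faithful with respect to validity of inequalities:
for all co-intuitionistic formulas `φ, ψ`, `⟦φ⟧_V ≤ ⟦ψ⟧_V` holds for every valuation
`V : Var → A` iff `⟦σ(φ)⟧_U ≤ ⟦σ(ψ)⟧_U` holds for every valuation `U : Var → B`. -/
theorem cogmt_full_faithful {A B : Type*} [CoheytingAlgebra A] [BooleanAlgebra B]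
    (e : A → B) (c : B → A)
    (hinj : Function.Injective e)
    (hinf : ∀ a b : A, e (a ⊓ b) = e a ⊓ e b)
    (hsup : ∀ a b : A, e (a ⊔ b) = e a ⊔ e b)
    (hbot : e ⊥ = ⊥) (htop : e ⊤ = ⊤)
    (hadj : ∀ (a : A) (b : B), c b ≤ a ↔ b ≤ e a)
    (hcoimp : ∀ a b : A, b \ a = c ((e a)ᶜ ⊓ e b))
    (φ ψ : CForm Var) :
    (∀ V : Var → A, φ.eval V ≤ ψ.eval V) ↔
    (∀ U : Var → B, (cogmt φ).eval (e ∘ c) U ≤ (cogmt ψ).eval (e ∘ c) U) := by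
  have hle : ∀ a b : A, e a ≤ e b ↔ a ≤ b := fun a b => by
    rw [← inf_eq_left, ← hinf, hinj.eq_iff, inf_eq_left]
  have hce : ∀ a : A, c (e a) = a := fun a =>
    eq_of_forall_ge_iff fun x => (hadj x (e a)).trans (hle a x)
  simp only [eval_cogmt e c hinf hsup hbot htop hcoimp, hle]
  refine ⟨fun h U => h (c ∘ U), fun h V => ?_⟩
  have hV : c ∘ (e ∘ V) = V := funext fun p => hce (V p)
  simpa only [hV] using h (e ∘ V)
end

section
/- For every co-Heyting algebra A there exist a Boolean algebra B, an injective lattice homomorphism e : A → B preserving ⊥ and ⊤, and a map c : B → A such that c(b) ≤ a iff b ≤ e(a) for all a ∈ A and b ∈ B (c is a left adjoint of e), and such that a >— b = c((e a)ᶜ ⊓ e b) for all a, b ∈ A, where >— is the co-implication of A (characterized by (a >— b) ≤ x iff b ≤ a ⊔ x) and ᶜ is Boolean complement in B. -/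
/-!
Sending `a` to the set of prime ideals not containing it embeds the lattice `A` in a powerset, by
the prime ideal theorem (`stoneMap_le_stoneMap`). Let `B` be the Boolean subalgebra generated by
the image; its elements are the clopen sets of the dual space, and each is a finite union of
differences `stoneMap x \ stoneMap y`. Such a difference lies below `stoneMap a` iff `x ≤ y ⊔ a`,
that is, iff `x \ y ≤ a`, so it has a least upper bound from `A`, namely `x \ y`; suprema of these
bounds serve for finite unions (`exists_least_stoneMap`). This gives the left adjoint of the
embedding, and the same computation for a single difference is the formula for co-implication.
-/

universe u

/-- The data of a Boolean algebra `B` together with an injective lattice homomorphism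
`e : A → B` preserving `⊥` and `⊤`, having a left adjoint `c : B → A`
(`c b ≤ a ↔ b ≤ e a`) such that the co-implication of `A` (i.e. `a >— b = b \ a`,
characterized by `(a >— b) ≤ x ↔ b ≤ a ⊔ x`) is recovered as
`a >— b = c ((e a)ᶜ ⊓ e b)`. -/
structure CoheytingBooleanEmbedding (A : Type u) [CoheytingAlgebra A] : Type (u + 1) where
  B : Type u
  [instB : BooleanAlgebra B]
  e : A → B
  c : B → A
  inj : Function.Injective e
  map_inf : ∀ a b : A, e (a ⊓ b) = e a ⊓ e b
  map_sup : ∀ a b : A, e (a ⊔ b) = e a ⊔ e b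
  map_bot : e ⊥ = ⊥
  map_top : e ⊤ = ⊤
  adj : ∀ (a : A) (b : B), c b ≤ a ↔ b ≤ e a
  coimp_eq : ∀ a b : A, b \ a = c ((e a)ᶜ ⊓ e b)

/-- The set of prime ideals of `A` that do not contain `a`: the clopen set representing `a`
in the dual space, a point of which is encoded as a prime ideal, the complement of the usual
prime filter. -/
def stoneMap {A : Type u} [CoheytingAlgebra A] (a : A) :
    Set {J : Order.Ideal A // J.IsPrime} :=
  {J | a ∉ J.1}

section

variable {A : Type u} [CoheytingAlgebra A]

theorem stoneMap_inf (a b : A) : stoneMap (a ⊓ b) = stoneMap a ⊓ stoneMap b := by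
  ext J
  have h : a ⊓ b ∈ J.1 ↔ a ∈ J.1 ∨ b ∈ J.1 :=
    ⟨J.2.mem_or_mem, fun h => h.elim (J.1.lower inf_le_left) (J.1.lower inf_le_right)⟩
  change a ⊓ b ∉ J.1 ↔ a ∉ J.1 ∧ b ∉ J.1
  tauto

theorem stoneMap_sup (a b : A) : stoneMap (a ⊔ b) = stoneMap a ⊔ stoneMap b := by
  ext J
  have h : a ⊔ b ∈ J.1 ↔ a ∈ J.1 ∧ b ∈ J.1 := Order.Ideal.sup_mem_iff
  change a ⊔ b ∉ J.1 ↔ a ∉ J.1 ∨ b ∉ J.1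
  tauto

theorem stoneMap_bot : stoneMap (⊥ : A) = ⊥ :=
  Set.eq_empty_of_forall_notMem fun J h => h J.1.bot_mem

theorem stoneMap_top : stoneMap (⊤ : A) = ⊤ :=
  Set.eq_univ_of_forall fun J => J.2.toIsProper.top_notMem

/-- The prime ideal theorem: if `a ≰ b`, some prime ideal contains `b` but not `a`. -/
theorem stoneMap_le_stoneMap {a b : A} : stoneMap a ≤ stoneMap b ↔ a ≤ b := by
  refine ⟨fun h => ?_, fun h J ha hb => ha (J.1.lower h hb)⟩
  by_contra hab
  have hd : Disjoint (Order.PFilter.principal a : Set A) (Order.Ideal.principal b : Set A) :=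
    Set.disjoint_left.2 fun x hx hx' =>
      hab ((Order.PFilter.mem_principal.1 hx).trans (Order.Ideal.mem_principal.1 hx'))
  obtain ⟨J, hJ, hbJ, haJ⟩ := DistribLattice.prime_ideal_of_disjoint_filter_ideal hd
  have ha : a ∉ J := Set.disjoint_left.1 haJ (Order.PFilter.mem_principal.2 le_rfl)
  exact h (show (⟨J, hJ⟩ : {J : Order.Ideal A // J.IsPrime}) ∈ stoneMap a from ha)
    (hbJ (Order.Ideal.mem_principal.2 le_rfl))

theorem stoneMap_sdiff_le {x y a : A} :
    stoneMap x \ stoneMap y ≤ stoneMap a ↔ x \ y ≤ a := by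
  rw [sdiff_le_iff, ← stoneMap_sup, stoneMap_le_stoneMap, sdiff_le_iff]

theorem isSublattice_range_stoneMap : IsSublattice (Set.range (stoneMap (A := A))) where
  supClosed := by
    rintro _ ⟨a, rfl⟩ _ ⟨b, rfl⟩
    exact ⟨a ⊔ b, stoneMap_sup a b⟩
  infClosed := by
    rintro _ ⟨a, rfl⟩ _ ⟨b, rfl⟩
    exact ⟨a ⊓ b, stoneMap_inf a b⟩

/-- Every element of the generated Boolean subalgebra has a least upper bound among the elements
of `A`; sending it there is the left adjoint of the embedding. -/
theorem exists_least_stoneMap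
    (b : BooleanSubalgebra.closure (Set.range (stoneMap (A := A)))) :
    ∃ c : A, ∀ a : A, c ≤ a ↔ b.1 ≤ stoneMap a := by
  obtain ⟨b, hb⟩ := b
  induction b, hb using BooleanSubalgebra.closure_sdiff_sup_induction
    isSublattice_range_stoneMap ⟨⊥, stoneMap_bot⟩ ⟨⊤, stoneMap_top⟩ with
  | sdiff x hx y hy =>
    obtain ⟨x, rfl⟩ := hx
    obtain ⟨y, rfl⟩ := hy
    exact ⟨x \ y, fun a => stoneMap_sdiff_le.symm⟩
  | sup x hx y hy ihx ihy =>
    obtain ⟨c, hc⟩ := ihx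
    obtain ⟨d, hd⟩ := ihy
    exact ⟨c ⊔ d, fun a => by rw [sup_le_iff, hc, hd, sup_le_iff]⟩

end

/-- Every co-Heyting algebra embeds into a Boolean algebra via an injective lattice
homomorphism preserving `⊥` and `⊤` which has a left adjoint `c` recovering the
co-implication as `a >— b = c ((e a)ᶜ ⊓ e b)`. -/
theorem exists_coheytingBooleanEmbedding (A : Type u) [CoheytingAlgebra A] :
    Nonempty (CoheytingBooleanEmbedding A) := by
  choose c hc using exists_least_stoneMap (A := A)
  exact ⟨{
    B := BooleanSubalgebra.closure (Set.range (stoneMap (A := A)))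
    e := fun a => ⟨stoneMap a, BooleanSubalgebra.subset_closure ⟨a, rfl⟩⟩
    c := c
    inj := fun a b h =>
      have h' : stoneMap a = stoneMap b := congrArg Subtype.val h
      le_antisymm (stoneMap_le_stoneMap.1 h'.le) (stoneMap_le_stoneMap.1 h'.ge)
    map_inf := fun a b => Subtype.ext (stoneMap_inf a b)
    map_sup := fun a b => Subtype.ext (stoneMap_sup a b)
    map_bot := Subtype.ext stoneMap_bot
    map_top := Subtype.ext stoneMap_top
    adj := fun a b => hc b a
    coimp_eq := fun a b => eq_of_forall_ge_iff fun x => by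
      rw [hc, ← stoneMap_sdiff_le, sdiff_eq, inf_comm]
      rfl }⟩
end

section
/- Let A be a bi-Heyting algebra and B a Boolean algebra, and let e : A → B be an injective lattice homomorphism preserving ⊥ and ⊤ which has both a right adjoint ι : B → A (e(a) ≤ b iff a ≤ ι(b)) and a left adjoint c : B → A (c(b) ≤ a iff b ≤ e(a)), such that a ⇨ b = ι((e a)ᶜ ⊔ e b) and a >— b = c((e a)ᶜ ⊓ e b) for all a, b ∈ A. Define □ := e ∘ ι and ◇ := e ∘ c on B. Then (B, □, ◇) is a normal S4-bimodal algebra: □⊤ = ⊤, □(x ⊓ y) = □x ⊓ □y, □x ≤ x, □x ≤ □□x, ◇⊥ = ⊥, ◇(x ⊔ y) = ◇x ⊔ ◇y, x ≤ ◇x, and ◇◇x ≤ ◇x, for all x, y ∈ B. -/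
/-!
The adjunctions `c ⊣ e ⊣ ι` are Galois connections. The right adjoint `ι` preserves meets and the
left adjoint `c` preserves joins, and `e` preserves finite ones of both, which gives normality of
`e ∘ ι` and `e ∘ c`. The counit `e ∘ ι ≤ id` and the unit `id ≤ e ∘ c` give the T-laws, and the
triangle identities `ι ∘ e ∘ ι = ι` and `c ∘ e ∘ c = c` give the 4-laws.
-/

/-- If `A` is a bi-Heyting algebra, `B` a Boolean algebra, and `e : A → B` an injective
lattice homomorphism preserving `⊥` and `⊤` with a right adjoint `ι` and a left adjoint
`c` recovering the Heyting implication and the co-implication of `A`, then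
`(B, □ := e ∘ ι, ◇ := e ∘ c)` is a normal S4-bimodal algebra. -/
theorem biheyting_bimodal_S4 {A B : Type*} [BiheytingAlgebra A] [BooleanAlgebra B]
    (e : A → B) (ι : B → A) (c : B → A)
    (hinj : Function.Injective e)
    (hinf : ∀ a b : A, e (a ⊓ b) = e a ⊓ e b)
    (hsup : ∀ a b : A, e (a ⊔ b) = e a ⊔ e b)
    (hbot : e ⊥ = ⊥) (htop : e ⊤ = ⊤)
    (hadjι : ∀ (a : A) (b : B), e a ≤ b ↔ a ≤ ι b)
    (hadjc : ∀ (a : A) (b : B), c b ≤ a ↔ b ≤ e a)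
    (himp : ∀ a b : A, a ⇨ b = ι ((e a)ᶜ ⊔ e b))
    (hcoimp : ∀ a b : A, b \ a = c ((e a)ᶜ ⊓ e b)) :
    e (ι ⊤) = ⊤ ∧
    (∀ x y : B, e (ι (x ⊓ y)) = e (ι x) ⊓ e (ι y)) ∧
    (∀ x : B, e (ι x) ≤ x) ∧
    (∀ x : B, e (ι x) ≤ e (ι (e (ι x)))) ∧
    e (c ⊥) = ⊥ ∧
    (∀ x y : B, e (c (x ⊔ y)) = e (c x) ⊔ e (c y)) ∧
    (∀ x : B, x ≤ e (c x)) ∧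
    (∀ x : B, e (c (e (c x))) ≤ e (c x)) := by
  have hι : GaloisConnection e ι := hadjι
  have hc : GaloisConnection c e := fun b a => hadjc a b
  refine ⟨by rw [hι.u_top, htop], fun x y => by rw [hι.u_inf, hinf], hι.l_u_le,
    fun x => (congrArg e (hι.u_l_u_eq_u x)).ge, by rw [hc.l_bot, hbot],
    fun x y => by rw [hc.l_sup, hsup], hc.le_u_l,
    fun x => (congrArg e (hc.l_u_l_eq_l x)).le⟩
end

section
/- For every bi-intuitionistic formula φ: (a) e(⟦φ⟧_V) = ⟦τ′(φ)⟧_{e∘V} for every valuation V : Var → A; and (b) ⟦τ′(φ)⟧_U = e(⟦φ⟧_{ι∘U}) for every valuation U : Var → B. -/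
/-!
Condition (b) holds by induction on the formula (`eval_gmtB`): `e` is a bounded lattice
homomorphism, and the translations of `→` and `>—` are exactly the images under `e` of the
expressions of `⇨` and `\` through `ι` and `c`. Condition (a) is the instance `U = e ∘ V` of (b),
since `ι ∘ e = id` (`rightAdjoint_apply_embedding`).
-/

/-- Bi-intuitionistic formulas over a set `Var` of propositional variables;
`coimp φ ψ` stands for the co-implication `φ >— ψ`. -/
inductive BForm (Var : Type*) : Type _
  | var : Var → BForm Var
  | bot : BForm Var
  | top : BForm Var
  | and : BForm Var → BForm Var → BForm Var
  | or : BForm Var → BForm Var → BForm Var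
  | imp : BForm Var → BForm Var → BForm Var
  | coimp : BForm Var → BForm Var → BForm Var

/-- Bimodal S4 formulas over a set `Var` of propositional variables. -/
inductive MForm (Var : Type*) : Type _
  | var : Var → MForm Var
  | bot : MForm Var
  | top : MForm Var
  | and : MForm Var → MForm Var → MForm Var
  | or : MForm Var → MForm Var → MForm Var
  | neg : MForm Var → MForm Var
  | box : MForm Var → MForm Var
  | dia : MForm Var → MForm Var

variable {Var : Type*}

/-- Homomorphic evaluation of a bi-intuitionistic formula in a bi-Heyting algebra `A`,
interpreting `→` by the Heyting implication `⇨` and the co-implication `φ >— ψ`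
as the co-Heyting difference `⟦ψ⟧ \ ⟦φ⟧`. -/
def BForm.eval {A : Type*} [BiheytingAlgebra A] (V : Var → A) : BForm Var → A
  | .var p => V p
  | .bot => ⊥
  | .top => ⊤
  | .and φ ψ => φ.eval V ⊓ ψ.eval V
  | .or φ ψ => φ.eval V ⊔ ψ.eval V
  | .imp φ ψ => φ.eval V ⇨ ψ.eval V
  | .coimp φ ψ => ψ.eval V \ φ.eval V

/-- Homomorphic evaluation of a bimodal S4 formula in a Boolean algebra `B`, interpreting
`¬` by Boolean complement, `□` by the given map `bx : B → B` and `◇` by `dm : B → B`. -/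
def MForm.eval {B : Type*} [BooleanAlgebra B] (bx dm : B → B) (U : Var → B) : MForm Var → B
  | .var p => U p
  | .bot => ⊥
  | .top => ⊤
  | .and α β => α.eval bx dm U ⊓ β.eval bx dm U
  | .or α β => α.eval bx dm U ⊔ β.eval bx dm U
  | .neg α => (α.eval bx dm U)ᶜ
  | .box α => bx (α.eval bx dm U)
  | .dia α => dm (α.eval bx dm U)

/-- The extended GMT translation `τ′` for bi-intuitionistic logic. -/
def gmtB : BForm Var → MForm Var
  | .var p => .box (.var p)
  | .bot => .bot
  | .top => .top
  | .and φ ψ => .and (gmtB φ) (gmtB ψ)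
  | .or φ ψ => .or (gmtB φ) (gmtB ψ)
  | .imp φ ψ => .box (.or (.neg (gmtB φ)) (gmtB ψ))
  | .coimp φ ψ => .dia (.and (.neg (gmtB φ)) (gmtB ψ))

/-- The embedding is a section of its right adjoint: `a ≤ ι (e a)` is the unit of the adjunction,
and the counit `e (ι (e a)) ≤ e a` descends to `A` because an injective meet-preserving map
reflects the order. -/
lemma rightAdjoint_apply_embedding {A B : Type*} [SemilatticeInf A] [SemilatticeInf B]
    {e : A → B} {ι : B → A} (hinj : Function.Injective e)
    (hinf : ∀ a b : A, e (a ⊓ b) = e a ⊓ e b)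
    (hadjι : ∀ (a : A) (b : B), e a ≤ b ↔ a ≤ ι b) (a : A) : ι (e a) = a := by
  refine le_antisymm ?_ ((hadjι _ _).1 le_rfl)
  have hcounit : e (ι (e a)) ≤ e a := (hadjι _ _).2 le_rfl
  exact inf_eq_left.1 (hinj (by rw [hinf, inf_eq_left.2 hcounit]))

/-- The translation commutes with evaluation. At a variable both sides are `e (ι (U p))`, because
`τ′` boxes variables; at `→` and `>—` the outer modality turns the Boolean expression in `e ⟦φ⟧`
and `e ⟦ψ⟧` into the image under `e` of the (co-)implication in `A`. -/
lemma eval_gmtB {Var A B : Type*} [BiheytingAlgebra A] [BooleanAlgebra B]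
    {e : A → B} {ι c : B → A}
    (hinf : ∀ a b : A, e (a ⊓ b) = e a ⊓ e b)
    (hsup : ∀ a b : A, e (a ⊔ b) = e a ⊔ e b)
    (hbot : e ⊥ = ⊥) (htop : e ⊤ = ⊤)
    (himp : ∀ a b : A, a ⇨ b = ι ((e a)ᶜ ⊔ e b))
    (hcoimp : ∀ a b : A, b \ a = c ((e a)ᶜ ⊓ e b))
    (φ : BForm Var) (U : Var → B) :
    (gmtB φ).eval (e ∘ ι) (e ∘ c) U = e (φ.eval (ι ∘ U)) := by
  induction φ with
  | var p => rfl
  | bot => exact hbot.symm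
  | top => exact htop.symm
  | and φ ψ ihφ ihψ => simp only [gmtB, MForm.eval, BForm.eval, hinf, ihφ, ihψ]
  | or φ ψ ihφ ihψ => simp only [gmtB, MForm.eval, BForm.eval, hsup, ihφ, ihψ]
  | imp φ ψ ihφ ihψ =>
    simp only [gmtB, MForm.eval, BForm.eval, himp, ihφ, ihψ, Function.comp_apply]
  | coimp φ ψ ihφ ihψ =>
    simp only [gmtB, MForm.eval, BForm.eval, hcoimp, ihφ, ihψ, Function.comp_apply]

/-- Conditions (a) and (b) for the extended GMT translation `τ′`: for every
bi-intuitionistic formula `φ`, (a) `e ⟦φ⟧_V = ⟦τ′(φ)⟧_{e∘V}` for every valuation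
`V : Var → A`, and (b) `⟦τ′(φ)⟧_U = e ⟦φ⟧_{ι∘U}` for every valuation `U : Var → B`,
where `□` is interpreted as `e ∘ ι` and `◇` as `e ∘ c`. -/
theorem gmtB_conditions_a_b {A B : Type*} [BiheytingAlgebra A] [BooleanAlgebra B]
    (e : A → B) (ι : B → A) (c : B → A)
    (hinj : Function.Injective e)
    (hinf : ∀ a b : A, e (a ⊓ b) = e a ⊓ e b)
    (hsup : ∀ a b : A, e (a ⊔ b) = e a ⊔ e b)
    (hbot : e ⊥ = ⊥) (htop : e ⊤ = ⊤)
    (hadjι : ∀ (a : A) (b : B), e a ≤ b ↔ a ≤ ι b)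
    (hadjc : ∀ (a : A) (b : B), c b ≤ a ↔ b ≤ e a)
    (himp : ∀ a b : A, a ⇨ b = ι ((e a)ᶜ ⊔ e b))
    (hcoimp : ∀ a b : A, b \ a = c ((e a)ᶜ ⊓ e b))
    (φ : BForm Var) :
    (∀ V : Var → A, e (φ.eval V) = (gmtB φ).eval (e ∘ ι) (e ∘ c) (e ∘ V)) ∧
    (∀ U : Var → B, (gmtB φ).eval (e ∘ ι) (e ∘ c) U = e (φ.eval (ι ∘ U))) := by
  have hb := eval_gmtB hinf hsup hbot htop himp hcoimp φ
  refine ⟨fun V => ?_, hb⟩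
  have hV : ι ∘ (e ∘ V) = V :=
    funext fun p => rightAdjoint_apply_embedding hinj hinf hadjι (V p)
  rw [hb, hV]
end

section
/- For every bi-intuitionistic formula φ: (a) e(⟦φ⟧_V) = ⟦σ′(φ)⟧_{e∘V} for every valuation V : Var → A; and (b) ⟦σ′(φ)⟧_U = e(⟦φ⟧_{c∘U}) for every valuation U : Var → B. -/
variable {Var : Type*}

/-- The extended co-GMT translation `σ′` for bi-intuitionistic logic. -/
def cogmtB : BForm Var → MForm Var
  | .var p => .dia (.var p)
  | .bot => .bot
  | .top => .top
  | .and φ ψ => .and (cogmtB φ) (cogmtB ψ)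
  | .or φ ψ => .or (cogmtB φ) (cogmtB ψ)
  | .imp φ ψ => .box (.or (.neg (cogmtB φ)) (cogmtB ψ))
  | .coimp φ ψ => .dia (.and (.neg (cogmtB φ)) (cogmtB ψ))

/-- Conditions (a) and (b) for the extended co-GMT translation `σ′`: for every
bi-intuitionistic formula `φ`, (a) `e ⟦φ⟧_V = ⟦σ′(φ)⟧_{e∘V}` for every valuation
`V : Var → A`, and (b) `⟦σ′(φ)⟧_U = e ⟦φ⟧_{c∘U}` for every valuation `U : Var → B`,
where `□` is interpreted as `e ∘ ι` and `◇` as `e ∘ c`. -/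
theorem cogmtB_conditions_a_b {A B : Type*} [BiheytingAlgebra A] [BooleanAlgebra B]
    (e : A → B) (ι : B → A) (c : B → A)
    (hinj : Function.Injective e)
    (hinf : ∀ a b : A, e (a ⊓ b) = e a ⊓ e b)
    (hsup : ∀ a b : A, e (a ⊔ b) = e a ⊔ e b)
    (hbot : e ⊥ = ⊥) (htop : e ⊤ = ⊤)
    (hadjι : ∀ (a : A) (b : B), e a ≤ b ↔ a ≤ ι b)
    (hadjc : ∀ (a : A) (b : B), c b ≤ a ↔ b ≤ e a)
    (himp : ∀ a b : A, a ⇨ b = ι ((e a)ᶜ ⊔ e b))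
    (hcoimp : ∀ a b : A, b \ a = c ((e a)ᶜ ⊓ e b))
    (φ : BForm Var) :
    (∀ V : Var → A, e (φ.eval V) = (cogmtB φ).eval (e ∘ ι) (e ∘ c) (e ∘ V)) ∧
    (∀ U : Var → B, (cogmtB φ).eval (e ∘ ι) (e ∘ c) U = e (φ.eval (c ∘ U))) := by
  -- `≤` uses monotonicity of `e`, read off from `hinf`, and `≥` the unit of `c ⊣ e`.
  have hce : ∀ a : A, c (e a) = a := fun a =>
    hinj (le_antisymm (by
      have h := (hadjc a (e a)).2 le_rfl
      rw [← inf_eq_left.2 h, hinf]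
      exact inf_le_right) ((hadjc _ _).1 le_rfl))
  have hb : ∀ U : Var → B,
      (cogmtB φ).eval (e ∘ ι) (e ∘ c) U = e (φ.eval (c ∘ U)) := by
    intro U
    induction φ with
    | var p => rfl
    | bot => exact hbot.symm
    | top => exact htop.symm
    | and φ ψ ihφ ihψ => simp only [cogmtB, MForm.eval, BForm.eval, ihφ, ihψ, hinf]
    | or φ ψ ihφ ihψ => simp only [cogmtB, MForm.eval, BForm.eval, ihφ, ihψ, hsup]
    | imp φ ψ ihφ ihψ =>
      simp only [cogmtB, MForm.eval, BForm.eval, ihφ, ihψ, himp, Function.comp_apply]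
    | coimp φ ψ ihφ ihψ =>
      simp only [cogmtB, MForm.eval, BForm.eval, ihφ, ihψ, hcoimp, Function.comp_apply]
  refine ⟨fun V => ?_, hb⟩
  have hV : c ∘ (e ∘ V) = V := funext fun p => hce (V p)
  rw [hb, hV]
end

section
/- Let ε : Var → {1, ∂} be an order type. Define the parametric GMT translation τ_ε from bi-intuitionistic formulas to bimodal S4-formulas by: τ_ε(p) = □p if ε(p) = 1 and τ_ε(p) = ◇p if ε(p) = ∂; τ_ε(⊥) = ⊥, τ_ε(⊤) = ⊤, τ_ε(φ∧ψ) = τ_ε(φ)∧τ_ε(ψ), τ_ε(φ∨ψ) = τ_ε(φ)∨τ_ε(ψ), τ_ε(φ→ψ) = □(¬τ_ε(φ) ∨ τ_ε(ψ)), and τ_ε(φ>—ψ) = ◇(¬τ_ε(φ) ∧ τ_ε(ψ)). Define r_ε : (Var → B) → (Var → A) by r_ε(U)(p) = ι(U(p)) if ε(p) = 1 and r_ε(U)(p) = c(U(p)) if ε(p) = ∂. Then for every bi-intuitionistic formula φ: (a) e(⟦φ⟧_V) = ⟦τ_ε(φ)⟧_{e∘V} for every valuation V : Var → A; and (b) ⟦τ_ε(φ)⟧_U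 = e(⟦φ⟧_{r_ε(U)}) for every valuation U : Var → B. -/
variable {Var : Type*}

/-- An order type value: `1` or `∂`. -/
inductive OrderTypeVal : Type
  | one : OrderTypeVal
  | dual : OrderTypeVal

/-- The parametric GMT translation `τ_ε`, sending `p` to `□p` if `ε p = 1` and to
`◇p` if `ε p = ∂`. -/
def gmtEps (ε : Var → OrderTypeVal) : BForm Var → MForm Var
  | .var p =>
    match ε p with
    | .one => .box (.var p)
    | .dual => .dia (.var p)
  | .bot => .bot
  | .top => .top
  | .and φ ψ => .and (gmtEps ε φ) (gmtEps ε ψ)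
  | .or φ ψ => .or (gmtEps ε φ) (gmtEps ε ψ)
  | .imp φ ψ => .box (.or (.neg (gmtEps ε φ)) (gmtEps ε ψ))
  | .coimp φ ψ => .dia (.and (.neg (gmtEps ε φ)) (gmtEps ε ψ))

/-- The map `r_ε` transferring valuations on `B` to valuations on `A`:
`r_ε(U)(p) = ι (U p)` if `ε p = 1`, and `r_ε(U)(p) = c (U p)` if `ε p = ∂`. -/
def rEps {A B : Type*} (ι c : B → A) (ε : Var → OrderTypeVal) (U : Var → B) : Var → A :=
  fun p =>
    match ε p with
    | .one => ι (U p)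
    | .dual => c (U p)

/-- Conditions (a) and (b) for the parametric GMT translation `τ_ε`: for every
bi-intuitionistic formula `φ`, (a) `e ⟦φ⟧_V = ⟦τ_ε(φ)⟧_{e∘V}` for every valuation
`V : Var → A`, and (b) `⟦τ_ε(φ)⟧_U = e ⟦φ⟧_{r_ε(U)}` for every valuation `U : Var → B`,
where `□` is interpreted as `e ∘ ι` and `◇` as `e ∘ c`. -/
theorem gmtEps_conditions_a_b {A B : Type*} [BiheytingAlgebra A] [BooleanAlgebra B]
    (e : A → B) (ι : B → A) (c : B → A)
    (hinj : Function.Injective e)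
    (hinf : ∀ a b : A, e (a ⊓ b) = e a ⊓ e b)
    (hsup : ∀ a b : A, e (a ⊔ b) = e a ⊔ e b)
    (hbot : e ⊥ = ⊥) (htop : e ⊤ = ⊤)
    (hadjι : ∀ (a : A) (b : B), e a ≤ b ↔ a ≤ ι b)
    (hadjc : ∀ (a : A) (b : B), c b ≤ a ↔ b ≤ e a)
    (himp : ∀ a b : A, a ⇨ b = ι ((e a)ᶜ ⊔ e b))
    (hcoimp : ∀ a b : A, b \ a = c ((e a)ᶜ ⊓ e b))
    (ε : Var → OrderTypeVal) (φ : BForm Var) :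
    (∀ V : Var → A, e (φ.eval V) = (gmtEps ε φ).eval (e ∘ ι) (e ∘ c) (e ∘ V)) ∧
    (∀ U : Var → B, (gmtEps ε φ).eval (e ∘ ι) (e ∘ c) U = e (φ.eval (rEps ι c ε U))) := by
  have hgc : GaloisConnection e ι := hadjι
  -- `ι` and `c` are one-sided inverses of `e`; this is where injectivity of `e` enters.
  have hιe : ∀ a, ι (e a) = a := fun a =>
    hinj (le_antisymm ((hadjι _ _).2 le_rfl)
      (hgc.monotone_l ((hadjι _ _).1 le_rfl)))
  have hce : ∀ a, c (e a) = a := fun a =>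
    hinj (le_antisymm (hgc.monotone_l ((hadjc _ _).2 le_rfl))
      ((hadjc _ _).1 le_rfl))
  have hb : ∀ U : Var → B,
      (gmtEps ε φ).eval (e ∘ ι) (e ∘ c) U = e (φ.eval (rEps ι c ε U)) := by
    intro U
    induction φ with
    | var p => cases h : ε p <;> simp [gmtEps, rEps, BForm.eval, MForm.eval, h]
    | bot => exact hbot.symm
    | top => exact htop.symm
    | and φ ψ ihφ ihψ => simp only [gmtEps, BForm.eval, MForm.eval, ihφ, ihψ, hinf]
    | or φ ψ ihφ ihψ => simp only [gmtEps, BForm.eval, MForm.eval, ihφ, ihψ, hsup]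
    | imp φ ψ ihφ ihψ =>
      simp only [gmtEps, BForm.eval, MForm.eval, ihφ, ihψ, himp, Function.comp_apply]
    | coimp φ ψ ihφ ihψ =>
      simp only [gmtEps, BForm.eval, MForm.eval, ihφ, ihψ, hcoimp, Function.comp_apply]
  refine ⟨fun V => ?_, hb⟩
  have hr : rEps ι c ε (e ∘ V) = V := by
    funext p
    cases h : ε p <;> simp [rEps, h, hιe, hce]
  rw [hb, hr]
end

section
/- For every order type ε : Var → {1, ∂} and all bi-intuitionistic formulas φ and ψ: ⟦φ⟧_V ≤ ⟦ψ⟧_V holds for every valuation V : Var → A if and only if ⟦τ_ε(φ)⟧_U ≤ ⟦τ_ε(ψ)⟧_U holds for every valuation U : Var → B. -/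
variable {Var : Type*}

/-- If `V` and `U` match on the variables, i.e. `⟦τ_ε(p)⟧_U = e (V p)` for all `p`, then the
translation of every formula is evaluated inside the image of `e`. -/
theorem gmtEps_eval_eq {A B : Type*} [BiheytingAlgebra A] [BooleanAlgebra B]
    {e : A → B} {ι : B → A} {c : B → A}
    (hinf : ∀ a b : A, e (a ⊓ b) = e a ⊓ e b)
    (hsup : ∀ a b : A, e (a ⊔ b) = e a ⊔ e b)
    (hbot : e ⊥ = ⊥) (htop : e ⊤ = ⊤)
    (himp : ∀ a b : A, a ⇨ b = ι ((e a)ᶜ ⊔ e b))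
    (hcoimp : ∀ a b : A, b \ a = c ((e a)ᶜ ⊓ e b))
    {ε : Var → OrderTypeVal} {U : Var → B} {V : Var → A}
    (hUV : ∀ p, (gmtEps ε (.var p)).eval (e ∘ ι) (e ∘ c) U = e (V p)) (φ : BForm Var) :
    (gmtEps ε φ).eval (e ∘ ι) (e ∘ c) U = e (φ.eval V) := by
  induction φ with
  | var p => exact hUV p
  | bot => exact hbot.symm
  | top => exact htop.symm
  | and φ ψ hφ hψ => simp only [gmtEps, MForm.eval, BForm.eval, hφ, hψ, hinf]
  | or φ ψ hφ hψ => simp only [gmtEps, MForm.eval, BForm.eval, hφ, hψ, hsup]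
  | imp φ ψ hφ hψ =>
    simp only [gmtEps, MForm.eval, BForm.eval, hφ, hψ, himp, Function.comp_apply]
  | coimp φ ψ hφ hψ =>
    simp only [gmtEps, MForm.eval, BForm.eval, hφ, hψ, hcoimp, Function.comp_apply]

/-- For every order type `ε` the parametric GMT translation `τ_ε` is full and faithful
with respect to validity of inequalities: for all bi-intuitionistic formulas `φ, ψ`,
`⟦φ⟧_V ≤ ⟦ψ⟧_V` holds for every valuation `V : Var → A` iff
`⟦τ_ε(φ)⟧_U ≤ ⟦τ_ε(ψ)⟧_U` holds for every valuation `U : Var → B`. -/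
theorem gmtEps_full_faithful {A B : Type*} [BiheytingAlgebra A] [BooleanAlgebra B]
    (e : A → B) (ι : B → A) (c : B → A)
    (hinj : Function.Injective e)
    (hinf : ∀ a b : A, e (a ⊓ b) = e a ⊓ e b)
    (hsup : ∀ a b : A, e (a ⊔ b) = e a ⊔ e b)
    (hbot : e ⊥ = ⊥) (htop : e ⊤ = ⊤)
    (hadjι : ∀ (a : A) (b : B), e a ≤ b ↔ a ≤ ι b)
    (hadjc : ∀ (a : A) (b : B), c b ≤ a ↔ b ≤ e a)
    (himp : ∀ a b : A, a ⇨ b = ι ((e a)ᶜ ⊔ e b))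
    (hcoimp : ∀ a b : A, b \ a = c ((e a)ᶜ ⊓ e b))
    (ε : Var → OrderTypeVal) (φ ψ : BForm Var) :
    (∀ V : Var → A, φ.eval V ≤ ψ.eval V) ↔
    (∀ U : Var → B, (gmtEps ε φ).eval (e ∘ ι) (e ∘ c) U ≤ (gmtEps ε ψ).eval (e ∘ ι) (e ∘ c) U) := by
  have hle : ∀ a b : A, e a ≤ e b ↔ a ≤ b := fun a b => by
    rw [← inf_eq_left, ← hinf, hinj.eq_iff, inf_eq_left]
  have hιe : ∀ a, ι (e a) = a := fun a =>
    le_antisymm ((hle _ _).1 ((hadjι _ _).2 le_rfl)) ((hadjι _ _).1 le_rfl)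
  have hce : ∀ a, c (e a) = a := fun a =>
    le_antisymm ((hadjc _ _).2 le_rfl) ((hle _ _).1 ((hadjc _ _).1 le_rfl))
  constructor
  · intro h U
    have hUV : ∀ p, ∃ a, (gmtEps ε (.var p)).eval (e ∘ ι) (e ∘ c) U = e a := fun p => by
      cases hp : ε p
      · exact ⟨ι (U p), by simp [gmtEps, hp, MForm.eval]⟩
      · exact ⟨c (U p), by simp [gmtEps, hp, MForm.eval]⟩
    choose V hV using hUV
    rw [gmtEps_eval_eq hinf hsup hbot htop himp hcoimp hV,
      gmtEps_eval_eq hinf hsup hbot htop himp hcoimp hV, hle]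
    exact h V
  · intro h V
    have hV : ∀ p, (gmtEps ε (.var p)).eval (e ∘ ι) (e ∘ c) (e ∘ V) = e (V p) := fun p => by
      cases hp : ε p <;> simp [gmtEps, hp, MForm.eval, hιe, hce]
    have := h (e ∘ V)
    rwa [gmtEps_eval_eq hinf hsup hbot htop himp hcoimp hV,
      gmtEps_eval_eq hinf hsup hbot htop himp hcoimp hV, hle] at this
end
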